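/- Let V be a complex vector space with a hermitian sesquilinear form ⟨·,·⟩, and let (Q_k)_{k∈ℕ} be a sequence of linear maps V → V, each symmetric with respect to ⟨·,·⟩, satisfying the nilpotency relations Σ_{k=0}^m Q_k ∘ Q_{m-k} = 0 for every m ∈ ℕ. Assume the positivity requirement for Q_0: for every v ∈ ker Q_0 the number ⟨v,v⟩ is real and nonnegative, and ⟨v,v⟩ = 0 if and only if v ∈ range Q_0. Then for every ψ_0 ∈ ker Q_0 there exist vectors ψ_1, ψ_2, … ∈ V such that Σ_{k=0}^m Q_k ψ_{m-k} = 0 for every m ∈ ℕ; that is, the formal power series ψ = Σ_{n≥0} λ^n ψ_n satisfies Q ψ = 0 for the formal power series operator Q = Σ_{k≥0} λ^k Q_k. -/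

import Mathlib

/-!
Write `Q ψ` and `⟨φ, χ⟩` for the Cauchy products of formal power series. If the coefficients of
`Q ψ` vanish below order `n`, then the lowest one, `w`, is the obstruction to continuing `ψ`. The
coefficient of order `n` of `Q (Q ψ) = 0` says `Q₀ w = 0`, and the coefficient of order `2 n` of
`⟨Q ψ, Q ψ⟩ = ⟨ψ, Q (Q ψ)⟩ = 0` says `⟨w, w⟩ = 0`. Positivity then places `w` in the range of `Q₀`,
so changing `ψₙ` cancels it.
-/

open Finset hiding antidiagonal mem_antidiagonal
open Finset.HasAntidiagonal (antidiagonal mem_antidiagonal)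

theorem sum_antidiagonal_antidiagonal_assoc {ι M : Type*} [AddMonoid ι] [HasAntidiagonal ι]
    [AddCommMonoid M] (f : ι → ι → ι → M) (n : ι) :
    ∑ p ∈ antidiagonal n, ∑ q ∈ antidiagonal p.1, f q.1 q.2 p.2 =
      ∑ p ∈ antidiagonal n, ∑ q ∈ antidiagonal p.2, f p.1 q.1 q.2 := by
  rw [sum_sigma', sum_sigma']
  refine sum_nbij' (fun x ↦ ⟨(x.2.1, x.2.2 + x.1.2), (x.2.2, x.1.2)⟩)
    (fun x ↦ ⟨(x.1.1 + x.2.1, x.2.2), (x.1.1, x.2.1)⟩) ?_ ?_ ?_ ?_ ?_ <;>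
  · rintro ⟨⟨i, j⟩, k, l⟩ h
    simp only [mem_sigma, mem_antidiagonal] at h
    obtain ⟨rfl, rfl⟩ := h
    simp [add_assoc]

section CauchyProduct

variable {A B C D E F : Type*} [AddCommMonoid A] [AddCommMonoid B] [AddCommMonoid C]
  [AddCommMonoid D] [AddCommMonoid E] [AddCommMonoid F]

/-- The Cauchy product of two formal power series, given by their sequences of coefficients, whose
coefficients are multiplied by a biadditive map `f`. It expresses at once the product of two series
of operators, the action of a series of operators on a series of vectors, and the pairing of two
series of vectors. -/
def cauchyProduct (f : A →+ B →+ C) (a : ℕ → A) (b : ℕ → B) (n : ℕ) : C :=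
  ∑ p ∈ antidiagonal n, f (a p.1) (b p.2)

theorem cauchyProduct_zero_left (f : A →+ B →+ C) (b : ℕ → B) : cauchyProduct f 0 b = 0 := by
  ext n
  simp [cauchyProduct]

theorem cauchyProduct_zero_right (f : A →+ B →+ C) (a : ℕ → A) : cauchyProduct f a 0 = 0 := by
  ext n
  simp [cauchyProduct]

theorem cauchyProduct_flip (f : A →+ B →+ C) (a : ℕ → A) (b : ℕ → B) :
    cauchyProduct f.flip b a = cauchyProduct f a b := by
  ext n
  exact Nat.sum_antidiagonal_swap (f := fun p ↦ f (a p.1) (b p.2))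

theorem cauchyProduct_assoc {f : D →+ C →+ F} {g : A →+ B →+ D} {h : A →+ E →+ F}
    {k : B →+ C →+ E} {a : ℕ → A} {b : ℕ → B} {c : ℕ → C}
    (hassoc : ∀ i j l, f (g (a i) (b j)) (c l) = h (a i) (k (b j) (c l))) :
    cauchyProduct f (cauchyProduct g a b) c = cauchyProduct h a (cauchyProduct k b c) := by
  ext n
  simp only [cauchyProduct, map_sum, AddMonoidHom.finsetSum_apply, hassoc]
  exact sum_antidiagonal_antidiagonal_assoc (fun i j l ↦ h (a i) (k (b j) (c l))) n

theorem cauchyProduct_add_of_forall_lt_eq_zero (f : A →+ B →+ C) {a : ℕ → A} {b : ℕ → B} {m n : ℕ}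
    (ha : ∀ i < m, a i = 0) (hb : ∀ j < n, b j = 0) :
    cauchyProduct f a b (m + n) = f (a m) (b n) := by
  refine sum_eq_single_of_mem (m, n) (mem_antidiagonal.2 rfl) ?_
  rintro ⟨i, j⟩ hij hne
  rw [mem_antidiagonal] at hij
  obtain hi | hj : i < m ∨ j < n := by grind
  · simp [ha i hi]
  · simp [hb j hj]

end CauchyProduct

section SeriesApply

variable {V A : Type*} [AddCommMonoid V] [AddCommMonoid A]

/-- The action of the formal power series of operators `∑ λ ^ k Q k` on the formal power series of
vectors `∑ λ ^ n φ n`, as a sequence of coefficients. -/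
def seriesApply (Q : ℕ → V →+ V) (φ : ℕ → V) : ℕ → V :=
  cauchyProduct (AddMonoidHom.id (V →+ V)) Q φ

theorem seriesApply_eq_sum_range (Q : ℕ → V →+ V) (φ : ℕ → V) (n : ℕ) :
    seriesApply Q φ n = ∑ k ∈ range (n + 1), Q k (φ (n - k)) :=
  Nat.sum_antidiagonal_eq_sum_range_succ (fun i j ↦ Q i (φ j)) n

theorem seriesApply_zero (Q : ℕ → V →+ V) (φ : ℕ → V) :
    seriesApply Q φ 0 = Q 0 (φ 0) := by
  simp [seriesApply_eq_sum_range]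

theorem seriesApply_succ (Q : ℕ → V →+ V) (φ : ℕ → V) (n : ℕ) :
    seriesApply Q φ (n + 1) =
      Q 0 (φ (n + 1)) + ∑ p ∈ antidiagonal n, Q (p.1 + 1) (φ p.2) :=
  Nat.sum_antidiagonal_succ

theorem seriesApply_seriesApply_eq_zero {Q : ℕ → V →+ V}
    (hnilp : cauchyProduct AddMonoidHom.compHom Q Q = 0) (φ : ℕ → V) :
    seriesApply Q (seriesApply Q φ) = 0 := by
  calc seriesApply Q (seriesApply Q φ)
      = seriesApply (cauchyProduct AddMonoidHom.compHom Q Q) φ :=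
        (cauchyProduct_assoc fun _ _ _ ↦ rfl).symm
    _ = 0 := by rw [hnilp, seriesApply, cauchyProduct_zero_left]

theorem cauchyProduct_seriesApply_left {B : V →+ V →+ A} {Q : ℕ → V →+ V}
    (hsymm : ∀ k v w, B (Q k v) w = B v (Q k w)) (φ χ : ℕ → V) :
    cauchyProduct B (seriesApply Q φ) χ = cauchyProduct B φ (seriesApply Q χ) := by
  calc cauchyProduct B (seriesApply Q φ) χ
      = cauchyProduct B (cauchyProduct (AddMonoidHom.id (V →+ V)).flip φ Q) χ := by
        rw [cauchyProduct_flip, seriesApply]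
    _ = cauchyProduct B φ (seriesApply Q χ) :=
        cauchyProduct_assoc fun i j l ↦ hsymm j (φ i) (χ l)

theorem seriesApply_mem_range_of_forall_lt_eq_zero {B : V →+ V →+ A} {Q : ℕ → V →+ V}
    (hsymm : ∀ k v w, B (Q k v) w = B v (Q k w))
    (hnilp : cauchyProduct AddMonoidHom.compHom Q Q = 0)
    (hnull : ∀ v, Q 0 v = 0 → B v v = 0 → v ∈ Set.range (Q 0))
    {φ : ℕ → V} {n : ℕ} (hφ : ∀ m < n, seriesApply Q φ m = 0) :
    seriesApply Q φ n ∈ Set.range (Q 0) := by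
  have hQQ : seriesApply Q (seriesApply Q φ) = 0 := seriesApply_seriesApply_eq_zero hnilp φ
  have hBQ : cauchyProduct B (seriesApply Q φ) (seriesApply Q φ) = 0 := by
    rw [cauchyProduct_seriesApply_left hsymm, hQQ, cauchyProduct_zero_right]
  refine hnull _ ?_ ?_
  · calc Q 0 (seriesApply Q φ n)
        = seriesApply Q (seriesApply Q φ) (0 + n) :=
          (cauchyProduct_add_of_forall_lt_eq_zero (AddMonoidHom.id (V →+ V)) (by simp) hφ).symm
      _ = 0 := congrFun hQQ _
  · calc B (seriesApply Q φ n) (seriesApply Q φ n)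
        = cauchyProduct B (seriesApply Q φ) (seriesApply Q φ) (n + n) :=
          (cauchyProduct_add_of_forall_lt_eq_zero B hφ hφ).symm
      _ = 0 := congrFun hBQ _

end SeriesApply

section PerturbativeSolution

variable {V : Type*} [AddCommGroup V]

/-- The series with constant term `ψ₀` obtained by solving `Q ψ = 0` order by order. The value of
`Function.invFun` is arbitrary at an order whose equation has no solution. -/
noncomputable def perturbativeSolution (Q : ℕ → V →+ V) (ψ₀ : V) : ℕ → V
  | 0 => ψ₀
  | n + 1 => Function.invFun (Q 0)
      (-∑ p : antidiagonal n, Q (p.1.1 + 1) (perturbativeSolution Q ψ₀ p.1.2))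
decreasing_by exact Nat.lt_succ_of_le (HasAntidiagonal.antidiagonal.snd_le p.2)

theorem seriesApply_perturbativeSolution_succ {Q : ℕ → V →+ V} {ψ₀ : V} {n : ℕ}
    (h : seriesApply Q (perturbativeSolution Q ψ₀) (n + 1) ∈ Set.range (Q 0)) :
    seriesApply Q (perturbativeSolution Q ψ₀) (n + 1) = 0 := by
  set ψ := perturbativeSolution Q ψ₀ with hψ
  set s := ∑ p ∈ antidiagonal n, Q (p.1 + 1) (ψ p.2) with hs
  have hψ_succ : ψ (n + 1) = Function.invFun (Q 0) (-s) := by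
    rw [hψ, perturbativeSolution, hs,
      ← sum_coe_sort (antidiagonal n) fun p ↦ Q (p.1 + 1) (ψ p.2)]
  have hs_mem : -s ∈ Set.range (Q 0) := by
    obtain ⟨x, hx⟩ := h
    refine ⟨ψ (n + 1) - x, ?_⟩
    rw [map_sub, hx, seriesApply_succ, sub_add_cancel_left]
  rw [seriesApply_succ, hψ_succ, Function.invFun_eq hs_mem, neg_add_cancel]

theorem seriesApply_perturbativeSolution {Q : ℕ → V →+ V} {ψ₀ : V} (hψ₀ : Q 0 ψ₀ = 0)
    (hobs : ∀ (φ : ℕ → V) (n : ℕ), (∀ m < n, seriesApply Q φ m = 0) →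
      seriesApply Q φ n ∈ Set.range (Q 0)) (n : ℕ) :
    seriesApply Q (perturbativeSolution Q ψ₀) n = 0 := by
  induction n using Nat.strong_induction_on with
  | h n ih =>
    cases n with
    | zero => rw [seriesApply_zero, perturbativeSolution, hψ₀]
    | succ n => exact seriesApply_perturbativeSolution_succ (hobs _ _ ih)

end PerturbativeSolution

theorem brst_state_deformation_general {V A : Type*} [AddCommGroup V] [AddCommMonoid A]
    (B : V →+ V →+ A) (Q : ℕ → V →+ V)
    (hQ_symm : ∀ (k : ℕ) (v w : V), B (Q k v) w = B v (Q k w))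
    (hQ_nilp : ∀ (m : ℕ) (v : V), ∑ k ∈ range (m + 1), Q k (Q (m - k) v) = 0)
    (hnull : ∀ v : V, Q 0 v = 0 → B v v = 0 → v ∈ Set.range (Q 0)) (ψ₀ : V) (hψ₀ : Q 0 ψ₀ = 0) :
    ∃ ψ : ℕ → V, ψ 0 = ψ₀ ∧ ∀ m : ℕ, ∑ k ∈ range (m + 1), Q k (ψ (m - k)) = 0 := by
  have hQQ : cauchyProduct AddMonoidHom.compHom Q Q = 0 := by
    ext m v
    rw [cauchyProduct, AddMonoidHom.finsetSum_apply]
    exact (Nat.sum_antidiagonal_eq_sum_range_succ (fun i j ↦ Q i (Q j v)) m).trans (hQ_nilp m v)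
  refine ⟨perturbativeSolution Q ψ₀, by rw [perturbativeSolution], fun m ↦ ?_⟩
  rw [← seriesApply_eq_sum_range]
  exact seriesApply_perturbativeSolution hψ₀
    (fun _ _ ↦ seriesApply_mem_range_of_forall_lt_eq_zero hQ_symm hQQ hnull) m

/-- the deformation argument. Given a hermitian sesquilinear form `B`
on a complex vector space `V`, `B`-symmetric linear maps `Q_k` with
`Σ_{k=0}^m Q_k Q_{m-k} = 0` for all `m`, and the positivity requirement for `Q_0`
(`⟨v,v⟩` real and nonnegative on `ker Q_0`, vanishing exactly on `range Q_0`),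
every `ψ_0 ∈ ker Q_0` extends to a formal power series `ψ = Σ λ^n ψ_n` with
`Q ψ = 0`, i.e. `Σ_{k=0}^m Q_k ψ_{m-k} = 0` for all `m`. -/
theorem brst_state_deformation
    {V : Type*} [AddCommGroup V] [Module ℂ V]
    (B : V → V → ℂ)
    (hB_add_left : ∀ v w u : V, B (v + w) u = B v u + B w u)
    (hB_add_right : ∀ u v w : V, B u (v + w) = B u v + B u w)
    (hB_smul_left : ∀ (a : ℂ) (v w : V), B (a • v) w = (starRingEnd ℂ) a * B v w)
    (hB_smul_right : ∀ (a : ℂ) (v w : V), B v (a • w) = a * B v w)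
    (hB_herm : ∀ v w : V, B v w = (starRingEnd ℂ) (B w v))
    (Q : ℕ → V →ₗ[ℂ] V)
    (hQ_symm : ∀ (k : ℕ) (v w : V), B (Q k v) w = B v (Q k w))
    (hQ_nilp : ∀ (m : ℕ) (v : V), ∑ k ∈ Finset.range (m + 1), Q k (Q (m - k) v) = 0)
    (hpos_real : ∀ v : V, Q 0 v = 0 → (B v v).im = 0 ∧ 0 ≤ (B v v).re)
    (hpos_null : ∀ v : V, Q 0 v = 0 → (B v v = 0 ↔ v ∈ Set.range (Q 0))) :
    ∀ ψ₀ : V, Q 0 ψ₀ = 0 →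
      ∃ ψ : ℕ → V, ψ 0 = ψ₀ ∧
        ∀ m : ℕ, ∑ k ∈ Finset.range (m + 1), Q k (ψ (m - k)) = 0 :=
  brst_state_deformation_general
    (AddMonoidHom.mk' (fun v ↦ AddMonoidHom.mk' (B v) (hB_add_right v)) fun v w ↦
      AddMonoidHom.ext (hB_add_left v w))
    (fun k ↦ (Q k).toAddMonoidHom) hQ_symm hQ_nilp fun v hv ↦ (hpos_null v hv).1
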